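/- Second-order Lie transform remainder estimate: Let j₀, N ∈ ℕ, r > 2 and 0 < σ < r/2. Let W be a formal Hamiltonian with W(n) = 0 whenever supp n ⊄ A(j₀,N), and let U be a formal Hamiltonian with ‖U‖_{j₀,N,r} < ∞. If (e/σ)·‖W‖_{j₀,N,r} ≤ 1/2, then ‖T_W U − U − {U,W}‖_{j₀,N,r−σ} ≤ (e/σ)²·‖W‖²_{j₀,N,r}·‖U‖_{j₀,N,r}. -/

import Mathlib

/-!
The theorem rests on one bracket estimate: if `W` is supported in the annulus, then
`‖{U, W}‖_{r-δ} ≤ δ⁻¹ ‖U‖_r ‖W‖_r` (`hnorm_bracket_le`). A pair of monomials `n`, `m` contributes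
to the bracket only through a common site `k`. It produces a monomial `l` with
`deg l = deg n + deg m - 2` and, by the triangle inequality through `k`,
`diam l ≤ diam n + diam m`; as `k` lies in `supp m`, it lies in the annulus, so `n` is seen by
the norm of `U`. The sum over `k` of the combinatorial factors is at most `deg n * deg m`, and the
remaining factor `deg l` is paid for by `s (r - δ)^(s-1) ≤ r^s / δ`, which is Bernoulli's
inequality.

Splitting the loss `σ` into `i` equal steps gives `‖U⁽ⁱ⁾‖_{r-σ} ≤ (i/σ)^i ‖W‖_r^i ‖U‖_r`. Two
terms of the series of `exp i` equal `i^i / i!`, so `i^i / i! ≤ e^i / 2` for `i ≥ 1`. With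
`x = (e/σ) ‖W‖_r ≤ 1/2`, the remainder is therefore at most
`∑_{i ≥ 2} x^i / 2 * ‖U‖_r ≤ x^2 ‖U‖_r`. The same bounds show that the Lie series converges
absolutely at every monomial meeting the annulus, which justifies removing its first two terms.
-/

open Classical MeasureTheory
open scoped BigOperators ENNReal NNReal

noncomputable section

namespace QPNLS

abbrev Lat (d : ℕ) := Fin d → ℤ

def jnorm {d : ℕ} (j : Lat d) : ℝ := Real.sqrt (∑ i, ((j i : ℝ))^2)

abbrev Mono (d : ℕ) := (Lat d →₀ ℕ) × (Lat d →₀ ℕ)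

abbrev FormalHam (d : ℕ) := Mono d → ℂ

def msupp {d : ℕ} (n : Mono d) : Finset (Lat d) := n.1.support ∪ n.2.support

def diam {d : ℕ} (n : Mono d) : ℝ :=
  (((msupp n ×ˢ msupp n).sup fun p => (jnorm (p.1 - p.2)).toNNReal) : ℝ≥0)

def deg {d : ℕ} (n : Mono d) : ℕ := (∑ j ∈ n.1.support, n.1 j) + (∑ j ∈ n.2.support, n.2 j)

def inBarrier {d : ℕ} (j₀ N : ℝ) (n : Mono d) : Prop :=
  ∃ j ∈ msupp n, |jnorm j - j₀| ≤ N

def suppInBarrier {d : ℕ} (j₀ N : ℝ) (n : Mono d) : Prop :=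
  ∀ j ∈ msupp n, |jnorm j - j₀| ≤ N

def hnorm {d : ℕ} (j₀ N r : ℝ) (W : FormalHam d) : ℝ≥0∞ :=
  ∑' n : Mono d, if inBarrier j₀ N n then
    (‖W n‖₊ : ℝ≥0∞) * (deg n : ℝ≥0∞) * ENNReal.ofReal (r ^ (diam n + (deg n : ℝ) - 1)) else 0

def bracketTerm {d : ℕ} (W U : FormalHam d) (l : Mono d) (p : Lat d × Mono d × Mono d) : ℂ :=
  if (∀ j : Lat d, (p.2.1.1 j : ℤ) + (p.2.2.1 j : ℤ) - (if j = p.1 then 1 else 0) = (l.1 j : ℤ))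
     ∧ (∀ j : Lat d, (p.2.1.2 j : ℤ) + (p.2.2.2 j : ℤ) - (if j = p.1 then 1 else 0) = (l.2 j : ℤ))
  then W p.2.1 * U p.2.2 *
    (((p.2.1.1 p.1 * p.2.2.2 p.1 : ℤ) - (p.2.1.2 p.1 * p.2.2.1 p.1 : ℤ) : ℤ) : ℂ)
  else 0

def bracket {d : ℕ} (W U : FormalHam d) : FormalHam d :=
  fun l => Complex.I * ∑' p : Lat d × Mono d × Mono d, bracketTerm W U l p

def BracketAbsConv {d : ℕ} (W U : FormalHam d) : Prop :=
  ∀ l : Mono d, Summable (fun p : Lat d × Mono d × Mono d => ‖bracketTerm W U l p‖)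

def adIter {d : ℕ} (W U : FormalHam d) : ℕ → FormalHam d
  | 0 => U
  | (i+1) => bracket (adIter W U i) W

def lieTransform {d : ℕ} (W U : FormalHam d) : FormalHam d :=
  fun l => ∑' i : ℕ, ((Nat.factorial i : ℂ))⁻¹ * adIter W U i l

def LieAbsConv {d : ℕ} (W U : FormalHam d) : Prop :=
  (∀ i : ℕ, BracketAbsConv (adIter W U i) W) ∧
  ∀ l : Mono d, Summable (fun i : ℕ => ((Nat.factorial i : ℝ))⁻¹ * ‖adIter W U i l‖)

def IsResonant {d : ℕ} (n : Mono d) : Prop := n.1 = n.2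

def freqSum {d : ℕ} (V : Lat d → ℝ) (n : Mono d) : ℝ :=
  ∑ j ∈ msupp n, ((n.1 j : ℝ) - (n.2 j : ℝ)) * V j

def slicedNorm {d : ℕ} (j₀ N r : ℝ) (A : ℕ) (Z R : FormalHam d) : ℝ≥0∞ :=
  ∑' n : Mono d, if diam n + (deg n : ℝ) = (A : ℝ) ∧ inBarrier j₀ N n then
    ((‖Z n‖₊ + ‖R n‖₊ : ℝ≥0) : ℝ≥0∞) * (deg n : ℝ≥0∞) *
      ENNReal.ofReal (r ^ (diam n + (deg n : ℝ) - 1)) else 0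

def pot {d : ℕ} (Γ : Finset (Lat d)) (v : Lat d → ℝ) (θ α : Fin d → ℝ) (j : Lat d) : ℝ :=
  ∑ ℓ ∈ Γ, v ℓ * Real.cos (2 * Real.pi * ∑ i, (ℓ i : ℝ) * (θ i + (j i : ℝ) * α i))

def diamZ {d : ℕ} (k : Lat d →₀ ℤ) : ℝ :=
  (((k.support ×ˢ k.support).sup fun p => (jnorm (p.1 - p.2)).toNNReal) : ℝ≥0)

def norm1Z {d : ℕ} (k : Lat d →₀ ℤ) : ℕ := ∑ j ∈ k.support, (k j).natAbs

def Nonresonant {d : ℕ} (ω : Lat d → ℝ) (γ : ℝ) (L M j₀ : ℕ) : Prop :=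
  ∀ k : Lat d →₀ ℤ, k ≠ 0 →
    (∃ j ∈ k.support, |jnorm j - (j₀ : ℝ)| ≤ (M : ℝ)^2) →
    diamZ k + (norm1Z k : ℝ) ≤ (M : ℝ) + 2 →
    (γ / (2 * (L : ℝ) * (M : ℝ)^2 * (j₀ : ℝ)) ^ (2 * (d + 1))) ^ (10 * L^4 * M^4) ≤
      |∑ j ∈ k.support, (k j : ℝ) * ω j|

def Dham {d : ℕ} (V : Lat d → ℝ) : FormalHam d :=
  fun n => if h : ∃ j : Lat d, n = (Finsupp.single j 1, Finsupp.single j 1)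
    then ((V h.choose / 2 : ℝ) : ℂ) else 0

def Z1ham {d : ℕ} (ε₂ : ℝ) : FormalHam d :=
  fun n => if ∃ j : Lat d, n = (Finsupp.single j 2, Finsupp.single j 2)
    then ((ε₂ / 4 : ℝ) : ℂ) else 0

def R1ham {d : ℕ} (ε₁ : ℝ) : FormalHam d :=
  fun n => if ∃ i j : Lat d, (∑ a, ((i - j) a).natAbs) = 1 ∧
      n = (Finsupp.single i 1, Finsupp.single j 1)
    then ((ε₁ / 2 : ℝ) : ℂ) else 0

def H1 {d : ℕ} (V : Lat d → ℝ) (ε₁ ε₂ : ℝ) : FormalHam d :=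
  fun n => Dham V n + Z1ham ε₂ n + R1ham ε₁ n

def Hseq {d : ℕ} (H : FormalHam d) (F : ℕ → FormalHam d) : ℕ → FormalHam d
  | 0 => H
  | (i+1) => lieTransform (F i) (Hseq H F i)

end QPNLS

namespace QPNLS

/-! ### Size of the monomials in a bracket -/

lemma jnorm_eq_norm {d : ℕ} (j : Lat d) :
    jnorm j = ‖WithLp.toLp 2 (fun i => (j i : ℝ))‖ := by
  simp [jnorm, EuclideanSpace.norm_eq]

lemma jnorm_sub_le {d : ℕ} (a b c : Lat d) : jnorm (a - c) ≤ jnorm (a - b) + jnorm (b - c) := by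
  simp only [jnorm_eq_norm]
  refine le_trans (le_of_eq ?_) (norm_add_le _ _)
  congr 1
  ext i
  simp

lemma diam_nonneg {d : ℕ} (n : Mono d) : 0 ≤ diam n := NNReal.coe_nonneg _

lemma jnorm_le_diam {d : ℕ} {n : Mono d} {a b : Lat d} (ha : a ∈ msupp n) (hb : b ∈ msupp n) :
    jnorm (a - b) ≤ diam n := by
  have h := Finset.le_sup (f := fun p : Lat d × Lat d => (jnorm (p.1 - p.2)).toNNReal)
    (Finset.mk_mem_product ha hb)
  exact (Real.le_coe_toNNReal _).trans (NNReal.coe_le_coe.2 h)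

lemma diam_le {d : ℕ} {n : Mono d} {c : ℝ} (hc : 0 ≤ c)
    (h : ∀ a ∈ msupp n, ∀ b ∈ msupp n, jnorm (a - b) ≤ c) : diam n ≤ c := by
  lift c to ℝ≥0 using hc
  refine NNReal.coe_le_coe.2 (Finset.sup_le ?_)
  rintro ⟨a, b⟩ hp
  obtain ⟨ha, hb⟩ := Finset.mem_product.1 hp
  exact Real.toNNReal_le_iff_le_coe.2 (h a ha b hb)

lemma deg_eq {d : ℕ} (n : Mono d) : deg n = n.1.degree + n.2.degree := rfl

lemma mem_msupp {d : ℕ} {n : Mono d} {j : Lat d} : j ∈ msupp n ↔ n.1 j ≠ 0 ∨ n.2 j ≠ 0 := by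
  simp [msupp]

lemma deg_pos_of_inBarrier {d : ℕ} {j₀ N : ℝ} {n : Mono d} (h : inBarrier j₀ N n) :
    1 ≤ deg n := by
  obtain ⟨j, hj, -⟩ := h
  have h1 := Finsupp.le_degree j n.1
  have h2 := Finsupp.le_degree j n.2
  rw [deg_eq]
  rw [mem_msupp] at hj
  omega

/-- The multiplicity of the site `k` in the monomial `n`, counting both components. -/
def mult {d : ℕ} (n : Mono d) (k : Lat d) : ℕ := n.1 k + n.2 k

lemma tsum_mult {d : ℕ} (n : Mono d) : ∑' k, (mult n k : ℝ≥0∞) = deg n := by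
  have key (f : Lat d →₀ ℕ) : ∑' k, (f k : ℝ≥0∞) = (f.degree : ℝ≥0∞) := by
    rw [tsum_eq_sum (s := f.support), Finsupp.degree_apply, Nat.cast_sum]
    intro k hk
    simpa using hk
  simp only [mult, Nat.cast_add]
  rw [ENNReal.tsum_add, key, key, deg_eq, Nat.cast_add]

/-- `l` is the monomial obtained by contracting the product of `n` and `m` at the site `k`,
i.e. removing one factor at `k` from each component. -/
def Contracts {d : ℕ} (l : Mono d) (k : Lat d) (n m : Mono d) : Prop :=
  (∀ j : Lat d, (n.1 j : ℤ) + (m.1 j : ℤ) - (if j = k then 1 else 0) = (l.1 j : ℤ))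
     ∧ (∀ j : Lat d, (n.2 j : ℤ) + (m.2 j : ℤ) - (if j = k then 1 else 0) = (l.2 j : ℤ))

lemma Contracts.eq {d : ℕ} {l l' : Mono d} {k : Lat d} {n m : Mono d}
    (h : Contracts l k n m) (h' : Contracts l' k n m) : l = l' := by
  refine Prod.ext (Finsupp.ext fun j => ?_) (Finsupp.ext fun j => ?_)
  · have := h.1 j; have := h'.1 j; omega
  · have := h.2 j; have := h'.2 j; omega

lemma Contracts.deg_add_two {d : ℕ} {l : Mono d} {k : Lat d} {n m : Mono d}
    (h : Contracts l k n m) : deg l + 2 = deg n + deg m := by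
  have h1 : l.1 + Finsupp.single k 1 = n.1 + m.1 := by
    ext j
    have := h.1 j
    simp only [Finsupp.add_apply, Finsupp.single_apply]
    split_ifs at * <;> grind
  have h2 : l.2 + Finsupp.single k 1 = n.2 + m.2 := by
    ext j
    have := h.2 j
    simp only [Finsupp.add_apply, Finsupp.single_apply]
    split_ifs at * <;> grind
  have e1 := congrArg Finsupp.degree h1
  have e2 := congrArg Finsupp.degree h2
  simp only [map_add, Finsupp.degree_single] at e1 e2
  simp only [deg_eq]
  omega

lemma Contracts.mem {d : ℕ} {l : Mono d} {k : Lat d} {n m : Mono d}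
    (h : Contracts l k n m) {j : Lat d} (hj : j ∈ msupp l) : j ∈ msupp n ∨ j ∈ msupp m := by
  simp only [mem_msupp] at *
  have h1 := h.1 j
  have h2 := h.2 j
  split_ifs at h1 h2 <;> omega

/-- The triangle inequality through the common site `k`. -/
lemma Contracts.diam_le {d : ℕ} {l : Mono d} {k : Lat d} {n m : Mono d}
    (h : Contracts l k n m) (hn : k ∈ msupp n) (hm : k ∈ msupp m) :
    diam l ≤ diam n + diam m := by
  have h1 := diam_nonneg n
  have h2 := diam_nonneg m
  refine QPNLS.diam_le (by positivity) fun a ha b hb => ?_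
  rcases h.mem ha with ha | ha <;> rcases h.mem hb with hb | hb
  · linarith [jnorm_le_diam ha hb]
  · linarith [jnorm_le_diam ha hn, jnorm_le_diam hm hb, jnorm_sub_le a k b]
  · linarith [jnorm_le_diam ha hm, jnorm_le_diam hn hb, jnorm_sub_le a k b]
  · linarith [jnorm_le_diam ha hb]

/-! ### The bracket estimate -/

/-- Cauchy-type estimate `s (r - δ)^(s-1) ≤ r^s / δ`, from Bernoulli's inequality. -/
lemma mul_rpow_sub_one_le {r δ s : ℝ} (hδ : 0 < δ) (hr : 0 < r - δ) (hs : 1 ≤ s) :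
    s * (r - δ) ^ (s - 1) ≤ δ⁻¹ * r ^ s := by
  have hb := one_add_mul_self_le_rpow_one_add (s := δ / (r - δ))
    (by have : 0 < δ / (r - δ) := by positivity
        linarith) hs
  have hx : r = (r - δ) * (1 + δ / (r - δ)) := by field_simp; ring
  have h1 : r ^ s = (r - δ) ^ s * (1 + δ / (r - δ)) ^ s := by
    conv_lhs => rw [hx]
    exact Real.mul_rpow hr.le (by positivity)
  have h2 : (r - δ) ^ s = (r - δ) ^ (s - 1) * (r - δ) := by
    rw [← Real.rpow_add_one hr.ne']; simp
  have hp : 0 < (r - δ) ^ (s - 1) := Real.rpow_pos_of_pos hr _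
  rw [h1, h2, inv_mul_eq_div, le_div_iff₀ hδ]
  calc s * (r - δ) ^ (s - 1) * δ = (r - δ) ^ (s - 1) * (r - δ) * (s * (δ / (r - δ))) := by
        field_simp
    _ ≤ _ := by gcongr; linarith

/-- The gain of the weight under contraction; when `deg l = 0` the left side vanishes, and
otherwise the exponent on the right is at least one. -/
lemma Contracts.weight_le {d : ℕ} {l : Mono d} {k : Lat d} {n m : Mono d} {r δ : ℝ}
    (h : Contracts l k n m) (hn : k ∈ msupp n) (hm : k ∈ msupp m) (hδ : 0 < δ) (hr : 1 ≤ r - δ) :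
    (deg l : ℝ) * (r - δ) ^ (diam l + (deg l : ℝ) - 1) ≤
      δ⁻¹ * (r ^ (diam n + (deg n : ℝ) - 1) * r ^ (diam m + (deg m : ℝ) - 1)) := by
  have hr0 : 0 < r := by linarith
  rw [← Real.rpow_add hr0]
  rcases Nat.eq_zero_or_pos (deg l) with h0 | h0
  · rw [h0]
    simp only [Nat.cast_zero, zero_mul]
    positivity
  have hd : (deg l : ℝ) + 2 = deg n + deg m := by exact_mod_cast h.deg_add_two
  have h1 : (1 : ℝ) ≤ deg l := by exact_mod_cast h0
  have hdi := h.diam_le hn hm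
  have hdn := diam_nonneg n
  have hdm := diam_nonneg m
  refine le_trans ?_ (mul_rpow_sub_one_le hδ (by linarith) (by linarith))
  refine mul_le_mul (by linarith) ?_ (Real.rpow_nonneg (by linarith) _) (by linarith)
  exact Real.rpow_le_rpow_of_exponent_le hr (by linarith)

/-- The summand of `hnorm` without its factor `deg n`. -/
def hterm {d : ℕ} (j₀ N r : ℝ) (W : FormalHam d) (n : Mono d) : ℝ≥0∞ :=
  if inBarrier j₀ N n then ‖W n‖ₑ * ENNReal.ofReal (r ^ (diam n + (deg n : ℝ) - 1)) else 0

lemma hnorm_eq {d : ℕ} (j₀ N r : ℝ) (W : FormalHam d) :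
    hnorm j₀ N r W = ∑' n, hterm j₀ N r W n * deg n := by
  refine tsum_congr fun n => ?_
  simp only [hterm, enorm_eq_nnnorm]
  split_ifs
  · ring
  · simp

lemma enorm_bracketTerm_le {d : ℕ} (U W : FormalHam d) (l : Mono d) (k : Lat d) (n m : Mono d) :
    ‖bracketTerm U W l (k, n, m)‖ₑ ≤
      if Contracts l k n m then ‖U n‖ₑ * ‖W m‖ₑ * (mult n k * mult m k : ℝ≥0∞) else 0 := by
  unfold bracketTerm Contracts
  split_ifs with h
  · rw [enorm_mul, enorm_mul]
    gcongr
    have : |((n.1 k * m.2 k : ℤ) - (n.2 k * m.1 k : ℤ))| ≤ (mult n k * mult m k : ℕ) := by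
      simp only [mult, Nat.cast_mul, Nat.cast_add]
      rw [abs_le]
      constructor <;> nlinarith [Nat.cast_nonneg (α := ℤ) (n.1 k), Nat.cast_nonneg (α := ℤ) (n.2 k),
        Nat.cast_nonneg (α := ℤ) (m.1 k), Nat.cast_nonneg (α := ℤ) (m.2 k),
        mul_nonneg (Nat.cast_nonneg (α := ℤ) (n.1 k)) (Nat.cast_nonneg (α := ℤ) (m.2 k)),
        mul_nonneg (Nat.cast_nonneg (α := ℤ) (n.2 k)) (Nat.cast_nonneg (α := ℤ) (m.1 k)),
        mul_nonneg (Nat.cast_nonneg (α := ℤ) (n.1 k)) (Nat.cast_nonneg (α := ℤ) (m.1 k)),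
        mul_nonneg (Nat.cast_nonneg (α := ℤ) (n.2 k)) (Nat.cast_nonneg (α := ℤ) (m.2 k))]
    have hcast : (mult n k * mult m k : ℝ≥0∞) = ENNReal.ofReal ((mult n k * mult m k : ℕ) : ℝ) := by
      rw [ENNReal.ofReal_natCast, Nat.cast_mul]
    rw [← ofReal_norm, hcast]
    apply ENNReal.ofReal_le_ofReal
    rw [Complex.norm_intCast]
    exact_mod_cast this
  · simp

lemma bracket_summand_le {d : ℕ} {j₀ N r δ : ℝ} (hδ : 0 < δ) (hr : 1 ≤ r - δ)
    (U W : FormalHam d) (hW : ∀ n : Mono d, ¬ suppInBarrier j₀ N n → W n = 0)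
    (l : Mono d) (k : Lat d) (n m : Mono d) :
    ‖bracketTerm U W l (k, n, m)‖ₑ *
        ((deg l : ℝ≥0∞) * ENNReal.ofReal ((r - δ) ^ (diam l + (deg l : ℝ) - 1))) ≤
      if Contracts l k n m then ENNReal.ofReal δ⁻¹ *
        ((hterm j₀ N r U n * mult n k) * (hterm j₀ N r W m * mult m k)) else 0 := by
  refine (mul_le_mul_left (enorm_bracketTerm_le U W l k n m) _).trans ?_
  split_ifs with h
  swap
  · simp
  by_cases hz : W m = 0 ∨ mult n k = 0 ∨ mult m k = 0
  · rcases hz with hz | hz | hz <;> simp [hz]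
  push Not at hz
  obtain ⟨hWm, hnk, hmk⟩ := hz
  have hkn : k ∈ msupp n := by rw [mem_msupp]; unfold mult at hnk; omega
  have hkm : k ∈ msupp m := by rw [mem_msupp]; unfold mult at hmk; omega
  -- `supp m` lies in the annulus, so the shared site `k` puts `n` in the range of the norm.
  have hk : |jnorm k - j₀| ≤ N := by
    by_contra hc
    exact hWm (hW m fun hs => hc (hs k hkm))
  have hbn : inBarrier j₀ N n := ⟨k, hkn, hk⟩
  have hbm : inBarrier j₀ N m := ⟨k, hkm, hk⟩
  have hw : (deg l : ℝ≥0∞) * ENNReal.ofReal ((r - δ) ^ (diam l + (deg l : ℝ) - 1)) ≤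
      ENNReal.ofReal δ⁻¹ * (ENNReal.ofReal (r ^ (diam n + (deg n : ℝ) - 1)) *
        ENNReal.ofReal (r ^ (diam m + (deg m : ℝ) - 1))) := by
    have hr0 : 0 ≤ r := by linarith
    rw [← ENNReal.ofReal_mul (by positivity), ← ENNReal.ofReal_mul (by positivity),
      ← ENNReal.ofReal_natCast, ← ENNReal.ofReal_mul (by positivity)]
    exact ENNReal.ofReal_le_ofReal (h.weight_le hkn hkm hδ hr)
  simp only [hterm, if_pos hbn, if_pos hbm]
  refine (mul_le_mul_right hw _).trans (le_of_eq ?_)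
  ring

/-- One bracket with a Hamiltonian supported in the annulus costs `1/δ` when the analyticity
radius shrinks by `δ`. -/
lemma hnorm_bracket_le {d : ℕ} {j₀ N r δ : ℝ} (hδ : 0 < δ) (hr : 1 ≤ r - δ)
    (U W : FormalHam d) (hW : ∀ n : Mono d, ¬ suppInBarrier j₀ N n → W n = 0) :
    hnorm j₀ N (r - δ) (bracket U W) ≤
      ENNReal.ofReal δ⁻¹ * (hnorm j₀ N r U * hnorm j₀ N r W) := by
  set G : Lat d → Mono d → Mono d → ℝ≥0∞ := fun k n m => ENNReal.ofReal δ⁻¹ *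
    ((hterm j₀ N r U n * mult n k) * (hterm j₀ N r W m * mult m k)) with hG
  calc hnorm j₀ N (r - δ) (bracket U W)
      ≤ ∑' l : Mono d, ∑' p : Lat d × Mono d × Mono d,
          if Contracts l p.1 p.2.1 p.2.2 then G p.1 p.2.1 p.2.2 else 0 := by
        unfold hnorm
        refine ENNReal.tsum_le_tsum fun l => ?_
        split_ifs
        swap
        · exact zero_le
        rw [mul_assoc, ← enorm_eq_nnnorm]
        have hb : ‖bracket U W l‖ₑ ≤ ∑' p, ‖bracketTerm U W l p‖ₑ := by
          unfold bracket
          rw [enorm_mul]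
          have : ‖Complex.I‖ₑ = 1 := by simp [← ofReal_norm]
          rw [this, one_mul]
          exact enorm_tsum_le_tsum_enorm
        refine (mul_le_mul_left hb _).trans ?_
        rw [← ENNReal.tsum_mul_right]
        exact ENNReal.tsum_le_tsum fun p =>
          bracket_summand_le hδ hr U W hW l p.1 p.2.1 p.2.2
    _ ≤ ∑' p : Lat d × Mono d × Mono d, G p.1 p.2.1 p.2.2 := by
        rw [ENNReal.tsum_comm]
        refine ENNReal.tsum_le_tsum fun p => ?_
        -- at most one monomial `l` is the contraction of a given `(k, n, m)`
        by_cases hex : ∃ l, Contracts l p.1 p.2.1 p.2.2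
        · obtain ⟨l, hl⟩ := hex
          rw [tsum_eq_single l fun l' hl' => if_neg fun hc => hl' (hc.eq hl), if_pos hl]
        · rw [ENNReal.tsum_eq_zero.2 fun l => if_neg fun hc => hex ⟨l, hc⟩]
          exact zero_le
    _ = ∑' n : Mono d, ∑' m : Mono d, ∑' k : Lat d, G k n m := by
        rw [ENNReal.tsum_prod', ENNReal.tsum_comm, ENNReal.tsum_prod']
    _ ≤ ∑' n : Mono d, ∑' m : Mono d, ENNReal.ofReal δ⁻¹ *
          ((hterm j₀ N r U n * deg n) * (hterm j₀ N r W m * deg m)) := by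
        refine ENNReal.tsum_le_tsum fun n => ENNReal.tsum_le_tsum fun m => ?_
        have hk (k : Lat d) : (mult m k : ℝ≥0∞) ≤ deg m := by
          rw [← tsum_mult m]
          exact ENNReal.le_tsum k
        calc ∑' k, G k n m
            ≤ ∑' k, ENNReal.ofReal δ⁻¹ * (hterm j₀ N r U n * (hterm j₀ N r W m * deg m)) *
                mult n k := by
              refine ENNReal.tsum_le_tsum fun k => ?_
              calc G k n m ≤ ENNReal.ofReal δ⁻¹ *
                    ((hterm j₀ N r U n * mult n k) * (hterm j₀ N r W m * deg m)) := by
                    simp only [hG]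
                    exact mul_le_mul_right (mul_le_mul_right (mul_le_mul_right (hk k) _) _) _
                _ = _ := by ring
          _ = _ := by
              rw [ENNReal.tsum_mul_left, tsum_mult]
              ring
    _ = _ := by
        simp_rw [ENNReal.tsum_mul_left, ENNReal.tsum_mul_right, ← hnorm_eq]

lemma hnorm_mono {d : ℕ} {j₀ N r r' : ℝ} (hr : 0 ≤ r) (hrr : r ≤ r') (W : FormalHam d) :
    hnorm j₀ N r W ≤ hnorm j₀ N r' W := by
  refine ENNReal.tsum_le_tsum fun n => ?_
  split_ifs with h
  · have h1 : (1 : ℝ) ≤ deg n := by exact_mod_cast deg_pos_of_inBarrier h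
    have := diam_nonneg n
    gcongr
    linarith
  · exact le_rfl

/-! ### Iterated brackets and the Lie series -/

lemma hnorm_adIter_le {d : ℕ} {j₀ N r δ : ℝ} (hδ : 0 < δ)
    (U W : FormalHam d) (hW : ∀ n : Mono d, ¬ suppInBarrier j₀ N n → W n = 0) (i : ℕ)
    (hr : 1 ≤ r - i * δ) :
    hnorm j₀ N (r - i * δ) (adIter W U i) ≤
      (ENNReal.ofReal δ⁻¹ * hnorm j₀ N r W) ^ i * hnorm j₀ N r U := by
  induction i with
  | zero => simp [adIter]
  | succ i ih =>
    have e : r - ((i + 1 : ℕ) : ℝ) * δ = (r - i * δ) - δ := by push_cast; ring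
    rw [e] at hr ⊢
    refine (hnorm_bracket_le hδ hr _ W hW).trans ?_
    have hm : hnorm j₀ N (r - i * δ) W ≤ hnorm j₀ N r W :=
      hnorm_mono (by linarith) (by have : 0 ≤ i * δ := by positivity
                                   linarith) W
    calc _ ≤ ENNReal.ofReal δ⁻¹ * (((ENNReal.ofReal δ⁻¹ * hnorm j₀ N r W) ^ i * hnorm j₀ N r U) *
            hnorm j₀ N r W) := by
          gcongr
          exact ih (by linarith)
      _ = _ := by ring

/-- The terms of index `i` and `i - 1` of the series of `exp i` are both `i ^ i / i!`. -/
lemma two_mul_pow_self_div_factorial_le {i : ℕ} (hi : 1 ≤ i) :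
    2 * ((i.factorial : ℝ)⁻¹ * (i : ℝ) ^ i) ≤ Real.exp 1 ^ i := by
  obtain ⟨j, rfl⟩ : ∃ j, i = j + 1 := ⟨i - 1, by omega⟩
  have h := Real.sum_le_exp_of_nonneg (x := ((j + 1 : ℕ) : ℝ)) (by positivity) (j + 2)
  rw [Finset.sum_range_succ, Finset.sum_range_succ] at h
  have h0 : 0 ≤ ∑ k ∈ Finset.range j, ((j + 1 : ℕ) : ℝ) ^ k / (k.factorial : ℝ) :=
    Finset.sum_nonneg fun _ _ => by positivity
  have e : ((j + 1 : ℕ) : ℝ) ^ j / (j.factorial : ℝ) =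
      (((j + 1).factorial : ℝ)⁻¹ * ((j + 1 : ℕ) : ℝ) ^ (j + 1)) := by
    rw [Nat.factorial_succ]
    have : (j.factorial : ℝ) ≠ 0 := by positivity
    push_cast
    field_simp
    ring
  have e2 : ((j + 1 : ℕ) : ℝ) ^ (j + 1) / ((j + 1).factorial : ℝ) =
      (((j + 1).factorial : ℝ)⁻¹ * ((j + 1 : ℕ) : ℝ) ^ (j + 1)) := by rw [inv_mul_eq_div]
  rw [e, e2] at h
  rw [← Real.exp_nat_mul, mul_one]
  linarith

/-- The `i`-th iterated bracket, with the loss `σ` split into `i` equal steps. -/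
lemma hnorm_adIter_div_factorial_le {d : ℕ} {j₀ N r σ : ℝ} (hσ : 0 < σ) (hr : 1 ≤ r - σ)
    (U W : FormalHam d) (hW : ∀ n : Mono d, ¬ suppInBarrier j₀ N n → W n = 0) {i : ℕ}
    (hi : 1 ≤ i) :
    ENNReal.ofReal ((i.factorial : ℝ)⁻¹) * hnorm j₀ N (r - σ) (adIter W U i) ≤
      2⁻¹ * (ENNReal.ofReal (Real.exp 1 / σ) * hnorm j₀ N r W) ^ i * hnorm j₀ N r U := by
  have hi0 : (0 : ℝ) < i := by exact_mod_cast hi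
  have hs : (i : ℝ) * (σ / i) = σ := by field_simp
  have h := hnorm_adIter_le (δ := σ / i) (r := r) (by positivity) U W hW i (by rwa [hs])
  rw [hs] at h
  have hc : ENNReal.ofReal ((i.factorial : ℝ)⁻¹) * ENNReal.ofReal (σ / i)⁻¹ ^ i ≤
      2⁻¹ * ENNReal.ofReal (Real.exp 1 / σ) ^ i := by
    have h2 : (2⁻¹ : ℝ≥0∞) = ENNReal.ofReal 2⁻¹ := by
      rw [ENNReal.ofReal_inv_of_pos (by norm_num)]; simp
    rw [h2, ← ENNReal.ofReal_pow (by positivity), ← ENNReal.ofReal_pow (by positivity),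
      ← ENNReal.ofReal_mul (by positivity), ← ENNReal.ofReal_mul (by positivity)]
    apply ENNReal.ofReal_le_ofReal
    have := two_mul_pow_self_div_factorial_le hi
    rw [inv_div, div_pow, div_pow, ← mul_div_assoc, ← mul_div_assoc]
    exact div_le_div_of_nonneg_right (by linarith) (by positivity)
  calc _ ≤ ENNReal.ofReal ((i.factorial : ℝ)⁻¹) *
        ((ENNReal.ofReal (σ / i)⁻¹ * hnorm j₀ N r W) ^ i * hnorm j₀ N r U) := by gcongr
    _ = (ENNReal.ofReal ((i.factorial : ℝ)⁻¹) * ENNReal.ofReal (σ / i)⁻¹ ^ i) *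
        (hnorm j₀ N r W ^ i * hnorm j₀ N r U) := by ring
    _ ≤ (2⁻¹ * ENNReal.ofReal (Real.exp 1 / σ) ^ i) *
        (hnorm j₀ N r W ^ i * hnorm j₀ N r U) := by gcongr
    _ = _ := by ring

/-- A finite norm controls each coefficient in its range. -/
lemma enorm_le_of_inBarrier {d : ℕ} {j₀ N r : ℝ} (hr : 1 ≤ r) (W : FormalHam d) {l : Mono d}
    (hl : inBarrier j₀ N l) : ‖W l‖ₑ ≤ hnorm j₀ N r W := by
  have h1 : (1 : ℝ) ≤ deg l := by exact_mod_cast deg_pos_of_inBarrier hl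
  have h2 := diam_nonneg l
  refine le_trans ?_ (ENNReal.le_tsum l)
  rw [if_pos hl, mul_assoc, ← enorm_eq_nnnorm]
  refine le_mul_of_one_le_right (zero_le) (one_le_mul ?_ ?_)
  · exact_mod_cast deg_pos_of_inBarrier hl
  · rw [ENNReal.one_le_ofReal]
    exact Real.one_le_rpow hr (by linarith)

/-- Second-order Lie transform remainder estimate. -/
theorem lie_transform_second_order_remainder {d : ℕ} (hd : 1 ≤ d) (j₀ N : ℕ) (r σ : ℝ)
    (hr : 2 < r) (hσ : 0 < σ) (hσr : σ < r / 2)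
    (W U : FormalHam d)
    (hWsupp : ∀ n : Mono d, ¬ suppInBarrier (j₀ : ℝ) (N : ℝ) n → W n = 0)
    (hUfin : hnorm (j₀ : ℝ) (N : ℝ) r U < ⊤)
    (hWsmall : ENNReal.ofReal (Real.exp 1 / σ) * hnorm (j₀ : ℝ) (N : ℝ) r W ≤ 1 / 2) :
    hnorm (j₀ : ℝ) (N : ℝ) (r - σ) (fun l => lieTransform W U l - U l - bracket U W l) ≤
      (ENNReal.ofReal (Real.exp 1 / σ))^2 * (hnorm (j₀ : ℝ) (N : ℝ) r W)^2 *
        hnorm (j₀ : ℝ) (N : ℝ) r U := by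
  have hr1 : 1 ≤ r - σ := by linarith
  set x : ℝ≥0∞ := ENNReal.ofReal (Real.exp 1 / σ) * hnorm (j₀ : ℝ) (N : ℝ) r W with hx
  set T : ℕ → ℝ≥0∞ := fun i => ENNReal.ofReal ((i.factorial : ℝ)⁻¹) *
    hnorm (j₀ : ℝ) (N : ℝ) (r - σ) (adIter W U i) with hT
  have hTle (i : ℕ) : T (i + 2) ≤ 2⁻¹ * x ^ (i + 2) * hnorm (j₀ : ℝ) (N : ℝ) r U :=
    hnorm_adIter_div_factorial_le hσ hr1 U W hWsupp (by omega)
  have hx2 : x ≤ 2⁻¹ := by simpa using hWsmall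
  -- the tail of the geometric series of ratio at most `1/2` absorbs the factor `1/2`
  have hsum : ∑' i, T (i + 2) ≤ x ^ 2 * hnorm (j₀ : ℝ) (N : ℝ) r U := by
    have hgeom : ∑' i : ℕ, x ^ i ≤ 2 := by
      rw [ENNReal.tsum_geometric]
      refine ENNReal.inv_le_iff_inv_le.2 ?_
      refine ENNReal.le_sub_of_add_le_left (ne_top_of_le_ne_top (by simp) hx2) ?_
      calc x + 2⁻¹ ≤ 2⁻¹ + 2⁻¹ := by gcongr
        _ = 1 := ENNReal.inv_two_add_inv_two
    calc ∑' i, T (i + 2) ≤ ∑' i : ℕ, (2⁻¹ * x ^ 2 * hnorm (j₀ : ℝ) (N : ℝ) r U) * x ^ i :=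
          ENNReal.tsum_le_tsum fun i => (hTle i).trans (le_of_eq (by ring))
      _ = (2⁻¹ * x ^ 2 * hnorm (j₀ : ℝ) (N : ℝ) r U) * ∑' i : ℕ, x ^ i := ENNReal.tsum_mul_left
      _ ≤ (2⁻¹ * x ^ 2 * hnorm (j₀ : ℝ) (N : ℝ) r U) * 2 := by gcongr
      _ = (2⁻¹ * 2) * (x ^ 2 * hnorm (j₀ : ℝ) (N : ℝ) r U) := by ring
      _ = _ := by rw [ENNReal.inv_mul_cancel (by simp) (by simp), one_mul]
  have hfact (i : ℕ) : ‖((i.factorial : ℂ))⁻¹‖ₑ = ENNReal.ofReal ((i.factorial : ℝ)⁻¹) := by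
    rw [← ofReal_norm, norm_inv, Complex.norm_natCast]
  -- finiteness of the norms makes the Lie series converge at every `l` meeting the annulus
  have hrem (l : Mono d) (hl : inBarrier (j₀ : ℝ) (N : ℝ) l) :
      ‖lieTransform W U l - U l - bracket U W l‖ₑ ≤
        ∑' i : ℕ, ENNReal.ofReal (((i + 2).factorial : ℝ)⁻¹) * ‖adIter W U (i + 2) l‖ₑ := by
    have hfin : ∑' i : ℕ, ENNReal.ofReal (((i + 2).factorial : ℝ)⁻¹) *
        ‖adIter W U (i + 2) l‖ₑ ≠ ⊤ := by
      refine ne_top_of_le_ne_top (b := x ^ 2 * hnorm (j₀ : ℝ) (N : ℝ) r U) ?_ ?_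
      · exact ENNReal.mul_ne_top (ENNReal.pow_ne_top (ne_top_of_le_ne_top (by simp) hx2)) hUfin.ne
      · refine le_trans (ENNReal.tsum_le_tsum fun i => ?_) hsum
        exact mul_le_mul_right (enorm_le_of_inBarrier hr1 _ hl) _
    have hsm : Summable fun i : ℕ => (((i + 2).factorial : ℂ))⁻¹ * adIter W U (i + 2) l := by
      refine Summable.of_nnnorm (ENNReal.tsum_coe_ne_top_iff_summable.1 ?_)
      refine ne_of_eq_of_ne (tsum_congr fun i => ?_) hfin
      rw [← enorm_eq_nnnorm, enorm_mul, hfact]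
    have hsm0 := (summable_nat_add_iff (f := fun i : ℕ => ((i.factorial : ℂ))⁻¹ * adIter W U i l)
      2).1 hsm
    have he : lieTransform W U l - U l - bracket U W l =
        ∑' i : ℕ, (((i + 2).factorial : ℂ))⁻¹ * adIter W U (i + 2) l := by
      unfold lieTransform
      rw [← hsm0.sum_add_tsum_nat_add 2]
      simp only [Finset.sum_range_succ, Finset.sum_range_zero, adIter, Nat.factorial_zero,
        Nat.factorial_one, Nat.cast_one, inv_one, one_mul, zero_add]
      ring
    rw [he]
    refine enorm_tsum_le_tsum_enorm.trans (le_of_eq (tsum_congr fun i => ?_))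
    rw [enorm_mul, hfact]
  calc hnorm (j₀ : ℝ) (N : ℝ) (r - σ) (fun l => lieTransform W U l - U l - bracket U W l)
      ≤ ∑' i, T (i + 2) := by
        simp only [hT, hnorm]
        simp_rw [← ENNReal.tsum_mul_left]
        rw [ENNReal.tsum_comm]
        refine ENNReal.tsum_le_tsum fun l => ?_
        split_ifs with hl
        · rw [mul_assoc, ← enorm_eq_nnnorm]
          refine (mul_le_mul_left (hrem l hl) _).trans (le_of_eq ?_)
          rw [← ENNReal.tsum_mul_right]
          refine tsum_congr fun i => ?_
          rw [← enorm_eq_nnnorm]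
          ring
        · simp
    _ ≤ x ^ 2 * hnorm (j₀ : ℝ) (N : ℝ) r U := hsum
    _ = _ := by rw [hx, mul_pow]

end QPNLS
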